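/- Let R be a commutative semiring, V a type, and μ : V → V → R a matrix with zero diagonal. If v, w ∈ V satisfy μ v w · μ w v = 0, then the detours at v and w commute: (μ↑v)↑w = (μ↑w)↑v. -/

import Mathlib

/-- The detour of a weighted digraph `μ` (a matrix with zero diagonal over a
commutative semiring) at a vertex `v`. -/
def wdetour {R V : Type*} [CommSemiring R] [DecidableEq V]
    (μ : V → V → R) (v : V) : V → V → R :=
  fun x y => if x = v ∨ y = v ∨ x = y then 0 else μ x y + μ x v * μ v y

/-!
For `v ≠ w` and distinct `x, y ∉ {v, w}`, the entry `(μ↑v)↑w x y` is the sum of the weights of the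
walks `x y`, `x v y`, `x w y`, `x v w y`, `x w v y` and `x v w v y`. Exchanging `v` and `w` permutes
the first five walks and turns the last one into `x w v w y`. Both `x v w v y` and `x w v w y`
traverse the two-cycle between `v` and `w`, so their weights vanish together with its weight; more
generally, it is enough that these two weights agree.
-/

section Detour

variable {R V : Type*} [CommSemiring R] [DecidableEq V] {μ : V → V → R} {v w x y : V}

theorem wdetour_apply_eq_zero (h : x = v ∨ y = v ∨ x = y) : wdetour μ v x y = 0 :=
  if_pos h

theorem wdetour_apply_of_ne (hxv : x ≠ v) (hyv : y ≠ v) (hxy : x ≠ y) :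
    wdetour μ v x y = μ x y + μ x v * μ v y :=
  if_neg (by simp [hxv, hyv, hxy])

theorem wdetour_wdetour_apply_eq_zero (h : x = v ∨ x = w ∨ y = v ∨ y = w ∨ x = y) :
    wdetour (wdetour μ v) w x y = 0 := by
  by_cases hw : x = w ∨ y = w ∨ x = y
  · exact wdetour_apply_eq_zero hw
  · obtain ⟨hxw, hyw, hxy⟩ : x ≠ w ∧ y ≠ w ∧ x ≠ y := by simpa only [not_or] using hw
    have hv : x = v ∨ y = v := by tauto
    rw [wdetour_apply_of_ne hxw hyw hxy]
    rcases hv with hxv | hyv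
    · simp [wdetour_apply_eq_zero, hxv]
    · simp [wdetour_apply_eq_zero, hyv]

theorem wdetour_wdetour_apply_of_ne (hvw : v ≠ w) (hxv : x ≠ v) (hxw : x ≠ w) (hyv : y ≠ v)
    (hyw : y ≠ w) (hxy : x ≠ y) :
    wdetour (wdetour μ v) w x y =
      μ x y + μ x v * μ v y + μ x w * μ w y + μ x v * μ v w * μ w y + μ x w * μ w v * μ v y +
        μ v w * μ w v * (μ x v * μ v y) := by
  rw [wdetour_apply_of_ne hxw hyw hxy, wdetour_apply_of_ne hxv hyv hxy,
    wdetour_apply_of_ne hxv hvw.symm hxw, wdetour_apply_of_ne hvw.symm hyv hyw.symm]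
  ring

theorem wdetour_comm_of_no_two_cycle_general
    (h : ∀ x y, x ≠ v → x ≠ w → y ≠ v → y ≠ w → x ≠ y →
      μ v w * μ w v * (μ x v * μ v y) = μ v w * μ w v * (μ x w * μ w y)) :
    wdetour (wdetour μ v) w = wdetour (wdetour μ w) v := by
  obtain rfl | hvw := eq_or_ne v w
  · rfl
  funext x y
  by_cases hzero : x = v ∨ x = w ∨ y = v ∨ y = w ∨ x = y
  · rw [wdetour_wdetour_apply_eq_zero hzero, wdetour_wdetour_apply_eq_zero (by tauto)]
  · obtain ⟨hxv, hxw, hyv, hyw, hxy⟩ : x ≠ v ∧ x ≠ w ∧ y ≠ v ∧ y ≠ w ∧ x ≠ y := by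
      simpa only [not_or] using hzero
    rw [wdetour_wdetour_apply_of_ne hvw hxv hxw hyv hyw hxy,
      wdetour_wdetour_apply_of_ne hvw.symm hxw hxv hyw hyv hxy, h x y hxv hxw hyv hyw hxy]
    ring

end Detour

/-- If `μ v w · μ w v = 0`, then the detours at `v` and `w` commute:
`(μ↑v)↑w = (μ↑w)↑v`. -/
theorem wdetour_comm_of_no_two_cycle {R V : Type*} [CommSemiring R] [DecidableEq V]
    (μ : V → V → R) (hdiag : ∀ x, μ x x = 0) (v w : V)
    (h : μ v w * μ w v = 0) :
    wdetour (wdetour μ v) w = wdetour (wdetour μ w) v :=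
  wdetour_comm_of_no_two_cycle_general fun x y _ _ _ _ _ => by rw [h, zero_mul, zero_mul]
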